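/- Let Γ be a finite simple graph with vertex set V, let v ∈ V, and let k be a nonzero integer. The group endomorphism of A(Γ) determined by sending the vertex generator v to v^k and fixing every other vertex generator is well-defined and injective; consequently, the subgroup of A(Γ) generated by v^k together with the vertex generators corresponding to V ∖ {v} is isomorphic to A(Γ). -/

import Mathlib

/-- The relators of the right-angled Artin group on a simple graph `Γ`:
one commutator for each edge. -/
def raagRels {V : Type*} (Γ : SimpleGraph V) : Set (FreeGroup V) :=
  {r | ∃ u v : V, Γ.Adj u v ∧
    r = FreeGroup.of u * FreeGroup.of v * (FreeGroup.of u)⁻¹ * (FreeGroup.of v)⁻¹}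

/-!
Raising every vertex generator `w` to a nonzero power `k w` is injective because all the generators
have compatible roots in a larger group. Let `ρ w` be the permutation
`(x, a) ↦ (x + e_w, w ^ (⌊(x w + 1) / k w⌋ - ⌊x w / k w⌋) * a)` of `(V → ℤ) × A(Γ)`.
The exponents telescope, so `ρ w ^ k w` acts on the second coordinate as left multiplication by `w`;
and `ρ u`, `ρ w` commute when `u`, `w` are adjacent, because each uses only its own integer
coordinate. Thus `w ↦ ρ w` extends to an action of `A(Γ)`. Under this action the image of `a` by the
power endomorphism multiplies the second coordinate by `a`, so it determines `a`.
-/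

open PresentedGroup (of)

section RootFlow

variable {ι G : Type*} [DecidableEq ι] [Group G]

/-- A `ℤ`-action on `(ι → ℤ) × G`, written as a family of permutations: time `n` translates the
`i`-th integer coordinate by `n` and multiplies the `G`-component by a power of `g` that counts the
multiples of `k` passed on the way. On the `G`-component, the time-one map is thus a `k`-th root of
left multiplication by `g`. Since `x / 0 = 0`, the `G`-component is fixed when `k = 0`. -/
def rootFlow (i : ι) (g : G) (k n : ℤ) : Equiv.Perm ((ι → ℤ) × G) :=
  (Equiv.addRight (Pi.single i n)).prodShear fun x =>
    Equiv.mulLeft (g ^ ((x i + n) / k - x i / k))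

@[simp]
theorem rootFlow_apply (i : ι) (g : G) (k n : ℤ) (p : (ι → ℤ) × G) :
    rootFlow i g k n p = (p.1 + Pi.single i n, g ^ ((p.1 i + n) / k - p.1 i / k) * p.2) :=
  rfl

theorem rootFlow_add (i : ι) (g : G) (k m n : ℤ) :
    rootFlow i g k (m + n) = rootFlow i g k m * rootFlow i g k n := by
  ext1 p
  simp only [Equiv.Perm.mul_apply, rootFlow_apply, Pi.add_apply, Pi.single_eq_same, Pi.single_add,
    add_comm m n, add_assoc, ← mul_assoc, ← zpow_add, sub_add_sub_cancel]

theorem rootFlow_one_zpow (i : ι) (g : G) (k n : ℤ) :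
    rootFlow i g k 1 ^ n = rootFlow i g k n := by
  let flow : Multiplicative ℤ →* Equiv.Perm ((ι → ℤ) × G) :=
    MonoidHom.mk' (fun n => rootFlow i g k n.toAdd) fun m n => rootFlow_add i g k m.toAdd n.toAdd
  simpa [flow, ← ofAdd_zsmul] using (map_zpow flow (Multiplicative.ofAdd 1) n).symm

theorem rootFlow_one_zpow_apply_snd (i : ι) (g : G) {k : ℤ} (hk : k ≠ 0) (p : (ι → ℤ) × G) :
    ((rootFlow i g k 1 ^ k) p).2 = g * p.2 := by
  simp [rootFlow_one_zpow, Int.add_ediv_of_dvd_right, Int.ediv_self hk]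

theorem commute_rootFlow {i j : ι} (hij : i ≠ j) {g h : G} (hgh : Commute g h) (k l m n : ℤ) :
    Commute (rootFlow i g k m) (rootFlow j h l n) := by
  ext1 p
  have comm_zpow (r s : ℤ) : g ^ r * (h ^ s * p.2) = h ^ s * (g ^ r * p.2) :=
    (hgh.zpow_zpow r s).left_comm p.2
  simp [hij, hij.symm, comm_zpow, add_right_comm]

end RootFlow

/-- The right-angled Artin group `A(Γ)`. -/
abbrev RAAG {V : Type*} (Γ : SimpleGraph V) : Type _ :=
  PresentedGroup (raagRels Γ)

namespace RAAG

variable {V : Type*} {Γ : SimpleGraph V}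

theorem commute_of_adj {u v : V} (h : Γ.Adj u v) : Commute (of u : RAAG Γ) (of v) := by
  have relator : (of u * of v * (of u)⁻¹ * (of v)⁻¹ : RAAG Γ) = 1 :=
    PresentedGroup.one_of_mem ⟨u, v, h, rfl⟩
  exact commutatorElement_eq_one_iff_commute.1 relator

section Lift

variable {H : Type*} [Group H]

/-- The universal property of `A(Γ)`: the homomorphism that extends a map on vertices under which
adjacent vertices have commuting images. -/
def lift (f : V → H) (hf : ∀ u v, Γ.Adj u v → Commute (f u) (f v)) : RAAG Γ →* H :=
  PresentedGroup.toGroup (f := f) <| by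
    rintro _ ⟨u, v, h, rfl⟩
    simp [(hf u v h).eq]

@[simp]
theorem lift_of (f : V → H) (hf : ∀ u v, Γ.Adj u v → Commute (f u) (f v)) (v : V) :
    lift f hf (of v) = f v :=
  PresentedGroup.toGroup.of _

end Lift

variable (Γ) in
/-- The endomorphism of `A(Γ)` that raises each vertex generator `w` to the power `k w`. -/
def powHom (k : V → ℤ) : RAAG Γ →* RAAG Γ :=
  lift (fun w => of w ^ k w) fun u v h => (commute_of_adj h).zpow_zpow (k u) (k v)

@[simp]
theorem powHom_of (k : V → ℤ) (w : V) : powHom Γ k (of w) = of w ^ k w :=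
  lift_of _ _ w

theorem range_powHom (k : V → ℤ) :
    (powHom Γ k).range = Subgroup.closure (Set.range fun w => (of w : RAAG Γ) ^ k w) := by
  rw [MonoidHom.range_eq_map, ← PresentedGroup.closure_range_of, MonoidHom.map_closure,
    ← Set.range_comp]
  simp only [Function.comp_def, powHom_of]

section RootAction

variable [DecidableEq V]

variable (Γ) in
/-- The action of `A(Γ)` on `(V → ℤ) × A(Γ)` in which each vertex generator `w` acts as a `k w`-th
root of left multiplication by `w` on the second coordinate. -/
def rootAction (k : V → ℤ) : RAAG Γ →* Equiv.Perm ((V → ℤ) × RAAG Γ) :=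
  lift (fun w => rootFlow w (of w) (k w) 1) fun u v h =>
    commute_rootFlow h.ne (commute_of_adj h) (k u) (k v) 1 1

theorem rootAction_powHom_apply_snd {k : V → ℤ} (hk : ∀ w, k w ≠ 0) (a : RAAG Γ)
    (p : (V → ℤ) × RAAG Γ) : (rootAction Γ k (powHom Γ k a) p).2 = a * p.2 := by
  have ha : a ∈ Subgroup.closure (Set.range of) := by
    simp only [PresentedGroup.closure_range_of, Subgroup.mem_top]
  induction ha using Subgroup.closure_induction generalizing p with
  | mem a ha =>
    obtain ⟨w, rfl⟩ := ha
    simpa [rootAction] using rootFlow_one_zpow_apply_snd w (of w) (hk w) p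
  | one => simp
  | mul a b _ _ iha ihb => simp [iha, ihb, mul_assoc]
  | inv a _ iha => simp [eq_inv_mul_iff_mul_eq, ← iha]

end RootAction

theorem powHom_injective {k : V → ℤ} (hk : ∀ w, k w ≠ 0) : Function.Injective (powHom Γ k) := by
  classical
  have recover : Function.LeftInverse (fun b => (rootAction Γ k b (0, 1)).2) (powHom Γ k) :=
    fun a => by simp [rootAction_powHom_apply_snd hk]
  exact recover.injective

end RAAG

theorem range_zpow_update {ι G : Type*} [DecidableEq ι] [Group G] (f : ι → G) (i : ι) (n : ℤ) :
    (Set.range fun j => f j ^ Function.update (1 : ι → ℤ) i n j) =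
      {f i ^ n} ∪ f '' {j | j ≠ i} := by
  rw [← Set.image_univ, ← Set.union_compl_self {i}, Set.image_union, Set.image_singleton,
    Function.update_self]
  congr 1
  exact Set.image_congr fun j (hj : j ≠ i) => by simp [hj]

theorem raag_power_of_generator_general {V : Type*} (Γ : SimpleGraph V) (k : V → ℤ)
    (hk : ∀ w, k w ≠ 0) :
    ∃ φ : RAAG Γ →* RAAG Γ,
      (∀ w, φ (of w) = of w ^ k w) ∧
      Function.Injective φ ∧
      Nonempty (Subgroup.closure (Set.range fun w => (of w : RAAG Γ) ^ k w) ≃* RAAG Γ) :=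
  have hinj := RAAG.powHom_injective (Γ := Γ) hk
  ⟨RAAG.powHom Γ k, RAAG.powHom_of k, hinj,
    RAAG.range_powHom (Γ := Γ) k ▸ ⟨(MonoidHom.ofInjective hinj).symm⟩⟩

/-- The endomorphism of `A(Γ)` sending the vertex generator `v` to `v^k` (with
`k ≠ 0`) and fixing every other vertex generator is well-defined and injective;
consequently, the subgroup generated by `v^k` and the other vertex generators is
isomorphic to `A(Γ)`. -/
theorem raag_power_of_generator {V : Type*} [Fintype V] (Γ : SimpleGraph V)
    (v : V) (k : ℤ) (hk : k ≠ 0) :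
    ∃ φ : PresentedGroup (raagRels Γ) →* PresentedGroup (raagRels Γ),
      φ (PresentedGroup.of v) = (PresentedGroup.of (rels := raagRels Γ) v) ^ k ∧
      (∀ w : V, w ≠ v → φ (PresentedGroup.of w) = PresentedGroup.of w) ∧
      Function.Injective φ ∧
      Nonempty (↥(Subgroup.closure
        ({(PresentedGroup.of (rels := raagRels Γ) v) ^ k} ∪
          (fun w => PresentedGroup.of (rels := raagRels Γ) w) '' {w | w ≠ v}))
        ≃* PresentedGroup (raagRels Γ)) := by
  classical
  have hk' (w : V) : Function.update (1 : V → ℤ) v k w ≠ 0 := by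
    obtain rfl | hw := eq_or_ne w v <;> simp [*]
  obtain ⟨φ, hφ, hinj, hiso⟩ := raag_power_of_generator_general Γ _ hk'
  exact ⟨φ, by simpa using hφ v, fun w hw => by simpa [hw] using hφ w, hinj,
    range_zpow_update (of (rels := raagRels Γ)) v k ▸ hiso⟩
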